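/- Assume M̄ ≥ 2D and that for some integer η ≥ 0 one has M_η = M̄ and |x(t_η) − y_η| ≤ (a M̄ + D) δ, and that condition (D) holds at every index k ≥ η. Then the symbol sequence after η contains no quadruple occurrence of the same symbol: for every m ≥ η, (h_{m+1}, h_{m+2}, h_{m+3}, h_{m+4}) ≠ (1,1,1,1) and (h_{m+1}, h_{m+2}, h_{m+3}, h_{m+4}) ≠ (−1,−1,−1,−1). -/

import Mathlib

/-!
While the symbol repeats, each step reduces the absolute error by at least `(M k - D) δ`; when it
changes, the error has just crossed zero and is at most `(M k + D) δ`. After such a change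
`M k ≤ a M (k + 1)` and `M (k + 1) ≥ Mbar`, so, just as at `η`, the error at the new index is at
most `(a M + D) δ` with `M ≥ Mbar`.

A run of four equal symbols cannot start from such an index: its three steps have sizes at least
`M`, `M` and `a M`, so they leave an absolute error of at most
`(a M + D + 3 D - (2 + a) M) δ ≤ 0`, whereas a zero error flips the symbol. A run that starts
neither at `η` nor at a change of symbol extends to the left, so induction on its first index rules
it out.
-/

noncomputable section

/-- Membership in the set `T = {k ≥ 1 : h_{k-1} h_k < 0}` of sign-change indices. -/
def Tmem (h : ℤ → ℝ) (k : ℕ) : Prop := 1 ≤ k ∧ h ((k : ℤ) - 1) * h (k : ℤ) < 0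

/-- The modified adaptive delta modulation system: sequences `h_k` (binary symbols,
indexed by `ℤ` so that `h (-1) = 1` makes sense), `y_k` (estimates at sample points)
and `M_k` (step sizes), driven by the sampled signal `x (k δ)`. -/
structure ADM (δ a Mbar M₀ y₀ : ℝ) (x : ℝ → ℝ) where
  h : ℤ → ℝ
  y : ℕ → ℝ
  M : ℕ → ℝ
  h_init : h (-1) = 1
  h_lt : ∀ k : ℕ, y k < x (k * δ) → h (k : ℤ) = 1
  h_gt : ∀ k : ℕ, x (k * δ) < y k → h (k : ℤ) = -1
  h_eq : ∀ k : ℕ, y k = x (k * δ) → h (k : ℤ) = - h ((k : ℤ) - 1)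
  y_zero : y 0 = y₀
  y_rec : ∀ k : ℕ, y (k + 1) = y k + h (k : ℤ) * M k * δ
  M_zero : M 0 = M₀
  M_pos : ∀ k : ℕ, 0 < M k
  M_rec_T : ∀ k : ℕ, Tmem h k → M k = max (a⁻¹ * M (k - 1)) Mbar
  M_rec_prev : ∀ k : ℕ, 1 ≤ k → ¬ Tmem h k → Tmem h (k - 1) → M k = M (k - 1)
  M_rec_grow : ∀ k : ℕ, 1 ≤ k → ¬ Tmem h k → ¬ Tmem h (k - 1) → M k = a * M (k - 1)

/-- Condition (D) at index `k`: `sup_{t ∈ [t_k, t_{k+1}]} |x(t) − x(t_k)| ≤ D δ`. -/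
def condD (δ D : ℝ) (x : ℝ → ℝ) (k : ℕ) : Prop :=
  ∀ t ∈ Set.Icc ((k : ℝ) * δ) (((k : ℝ) + 1) * δ), |x t - x ((k : ℝ) * δ)| ≤ D * δ

namespace ADM

variable {δ a Mbar M₀ y₀ D : ℝ} {x : ℝ → ℝ} (S : ADM δ a Mbar M₀ y₀ x) {k : ℕ}

/-- The tracking error `x (t_k) - y_k` at the `k`-th sample point. -/
def error (k : ℕ) : ℝ := x (k * δ) - S.y k

/-- The situation at `η`, which recurs at every later change of symbol and from which no run of
four equal symbols can start if `2 D ≤ Mbar`: the step size is at least `Mbar` and the error at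
most `(a M k + D) δ`. -/
structure IsControlled (D : ℝ) (k : ℕ) : Prop where
  le_M : Mbar ≤ S.M k
  abs_error_le : |S.error k| ≤ (a * S.M k + D) * δ

lemma h_succ_of_error_eq_zero (he : S.error (k + 1) = 0) : S.h (k + 1 : ℕ) = -S.h k := by
  simpa using S.h_eq (k + 1) (sub_eq_zero.1 he).symm

lemma abs_h (k : ℕ) : |S.h k| = 1 := by
  rcases lt_trichotomy (S.y k) (x (k * δ)) with hlt | heq | hgt
  · simp [S.h_lt k hlt]
  · cases k with
    | zero => simpa [S.h_init] using congrArg abs (S.h_eq 0 heq)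
    | succ k => rw [S.h_succ_of_error_eq_zero (sub_eq_zero.2 heq.symm), abs_neg, abs_h k]
  · simp [S.h_gt k hgt]

lemma h_mul_self (k : ℕ) : S.h k * S.h k = 1 := by
  rw [← abs_mul_abs_self, S.abs_h, one_mul]

lemma h_mul_error (k : ℕ) : S.h k * S.error k = |S.error k| := by
  rcases lt_trichotomy (S.y k) (x (k * δ)) with hlt | heq | hgt
  · have hpos : 0 < S.error k := sub_pos.2 hlt
    rw [S.h_lt k hlt, one_mul, abs_of_pos hpos]
  · simp [error, heq]
  · have hneg : S.error k < 0 := sub_neg.2 hgt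
    rw [S.h_gt k hgt, neg_one_mul, abs_of_neg hneg]

lemma h_succ_eq_neg_iff : S.h (k + 1 : ℕ) = -S.h k ↔ S.h (k + 1 : ℕ) ≠ S.h k := by
  have hk := eq_or_eq_neg_of_abs_eq (S.abs_h k)
  have hk' := eq_or_eq_neg_of_abs_eq (S.abs_h (k + 1))
  grind

lemma tmem_succ_iff : Tmem S.h (k + 1) ↔ S.h (k + 1 : ℕ) ≠ S.h k := by
  have hpred : ((k + 1 : ℕ) : ℤ) - 1 = k := by simp
  rw [Tmem, hpred]
  constructor
  · rintro ⟨-, hneg⟩ heq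
    rw [heq, S.h_mul_self] at hneg
    linarith
  · intro hne
    refine ⟨k.succ_pos, ?_⟩
    rw [S.h_succ_eq_neg_iff.2 hne, mul_neg, S.h_mul_self]
    norm_num

lemma error_succ_ne_zero_of_h_succ_eq (hk : S.h (k + 1 : ℕ) = S.h k) : S.error (k + 1) ≠ 0 :=
  fun he => S.h_succ_eq_neg_iff.1 (S.h_succ_of_error_eq_zero he) hk

lemma abs_h_mul_error_succ_sub_le (hx : |x ((k + 1 : ℕ) * δ) - x (k * δ)| ≤ D * δ) :
    |S.h k * S.error (k + 1) - (|S.error k| - S.M k * δ)| ≤ D * δ := by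
  have hstep : S.h k * S.error (k + 1) - (|S.error k| - S.M k * δ) =
      S.h k * (x ((k + 1 : ℕ) * δ) - x (k * δ)) := by
    rw [← S.h_mul_error, error, error, S.y_rec]
    linear_combination (-S.M k * δ) * S.h_mul_self k
  rwa [hstep, abs_mul, S.abs_h, one_mul]

lemma abs_error_succ_le_of_h_succ_eq (hx : |x ((k + 1 : ℕ) * δ) - x (k * δ)| ≤ D * δ)
    (hk : S.h (k + 1 : ℕ) = S.h k) :
    |S.error (k + 1)| ≤ |S.error k| + (D - S.M k) * δ := by
  have hstep := S.abs_h_mul_error_succ_sub_le hx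
  rw [← hk, S.h_mul_error] at hstep
  linarith [(abs_le.1 hstep).2]

lemma abs_error_succ_le_of_h_succ_ne (hx : |x ((k + 1 : ℕ) * δ) - x (k * δ)| ≤ D * δ)
    (hk : S.h (k + 1 : ℕ) ≠ S.h k) :
    |S.error (k + 1)| ≤ (S.M k + D) * δ := by
  have hstep := S.abs_h_mul_error_succ_sub_le hx
  rw [← neg_eq_iff_eq_neg.2 (S.h_succ_eq_neg_iff.2 hk), neg_mul, S.h_mul_error] at hstep
  linarith [(abs_le.1 hstep).1, abs_nonneg (S.error k)]

lemma M_le_M_succ (ha : 1 ≤ a) (hk : S.h (k + 1 : ℕ) = S.h k) : S.M k ≤ S.M (k + 1) := by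
  have hT : ¬ Tmem S.h (k + 1) := fun h => S.tmem_succ_iff.1 h hk
  by_cases hprev : Tmem S.h k
  · exact (S.M_rec_prev (k + 1) k.succ_pos hT hprev).ge
  · exact (le_mul_of_one_le_left (S.M_pos k).le ha).trans_eq
      (S.M_rec_grow (k + 1) k.succ_pos hT hprev).symm

lemma M_add_two (hk : S.h (k + 1 : ℕ) = S.h k) (hk' : S.h (k + 2 : ℕ) = S.h (k + 1 : ℕ)) :
    S.M (k + 2) = a * S.M (k + 1) :=
  S.M_rec_grow (k + 2) (k + 1).succ_pos (fun h => S.tmem_succ_iff.1 h hk')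
    (fun h => S.tmem_succ_iff.1 h hk)

lemma M_succ_of_h_succ_ne (hk : S.h (k + 1 : ℕ) ≠ S.h k) :
    S.M (k + 1) = max (a⁻¹ * S.M k) Mbar :=
  S.M_rec_T (k + 1) (S.tmem_succ_iff.2 hk)

lemma isControlled_succ_of_h_succ_ne (hδ : 0 ≤ δ) (ha : 0 < a)
    (hx : |x ((k + 1 : ℕ) * δ) - x (k * δ)| ≤ D * δ) (hk : S.h (k + 1 : ℕ) ≠ S.h k) :
    S.IsControlled D (k + 1) := by
  have hM := S.M_succ_of_h_succ_ne hk
  have hle : S.M k ≤ a * S.M (k + 1) := (inv_mul_le_iff₀ ha).1 (hM ▸ le_max_left _ _)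
  refine ⟨hM ▸ le_max_right _ _, ?_⟩
  calc |S.error (k + 1)| ≤ (S.M k + D) * δ := S.abs_error_succ_le_of_h_succ_ne hx hk
    _ ≤ (a * S.M (k + 1) + D) * δ := by gcongr

variable {S} in
lemma IsControlled.not_run_of_four (hc : S.IsControlled D k) (hδ : 0 ≤ δ) (ha : 1 ≤ a)
    (hMD : 2 * D ≤ Mbar)
    (hx : ∀ j, k ≤ j → |x ((j + 1 : ℕ) * δ) - x (j * δ)| ≤ D * δ) :
    ¬ (S.h (k + 1 : ℕ) = S.h k ∧ S.h (k + 2 : ℕ) = S.h (k + 1 : ℕ) ∧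
      S.h (k + 3 : ℕ) = S.h (k + 2 : ℕ)) := by
  rintro ⟨h₁, h₂, h₃⟩
  have hM₁ : S.M k ≤ S.M (k + 1) := S.M_le_M_succ ha h₁
  have hM₂ : S.M (k + 2) = a * S.M (k + 1) := S.M_add_two h₁ h₂
  have he₁ := S.abs_error_succ_le_of_h_succ_eq (hx k le_rfl) h₁
  have he₂ := S.abs_error_succ_le_of_h_succ_eq (hx (k + 1) (by lia)) h₂
  have he₃ := S.abs_error_succ_le_of_h_succ_eq (hx (k + 2) (by lia)) h₃
  have hsteps : a * S.M k + 4 * D ≤ S.M k + S.M (k + 1) + S.M (k + 2) := by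
    have : a * S.M k ≤ a * S.M (k + 1) := by gcongr
    linarith [hc.le_M]
  have herror : |S.error (k + 3)| ≤ 0 := by
    calc |S.error (k + 3)|
        ≤ |S.error k| + (3 * D - (S.M k + S.M (k + 1) + S.M (k + 2))) * δ := by linarith
      _ ≤ (a * S.M k + D) * δ + (3 * D - (S.M k + S.M (k + 1) + S.M (k + 2))) * δ := by
        gcongr; exact hc.abs_error_le
      _ = (a * S.M k + 4 * D - (S.M k + S.M (k + 1) + S.M (k + 2))) * δ := by ring
      _ ≤ 0 := mul_nonpos_of_nonpos_of_nonneg (sub_nonpos.2 hsteps) hδ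
  exact S.error_succ_ne_zero_of_h_succ_eq h₃ (abs_nonpos_iff.1 herror)

end ADM

lemma condD.abs_sample_succ_sub_le {δ D : ℝ} {x : ℝ → ℝ} {k : ℕ} (hk : condD δ D x k)
    (hδ : 0 ≤ δ) : |x ((k + 1 : ℕ) * δ) - x (k * δ)| ≤ D * δ := by
  rw [Nat.cast_succ]
  exact hk _ ⟨by gcongr; linarith, le_rfl⟩

theorem stmt8_general {δ a Mbar M₀ y₀ D : ℝ} {x : ℝ → ℝ} (hδ : 0 ≤ δ) (ha : 1 ≤ a)
    (hMD : 2 * D ≤ Mbar) (S : ADM δ a Mbar M₀ y₀ x) {η : ℕ} (hMη : Mbar ≤ S.M η)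
    (hyη : |x (η * δ) - S.y η| ≤ (a * S.M η + D) * δ)
    (hx : ∀ k : ℕ, η ≤ k → |x ((k + 1 : ℕ) * δ) - x (k * δ)| ≤ D * δ) {m : ℕ} (hm : η ≤ m) :
    ¬ (S.h (m + 1 : ℕ) = S.h m ∧ S.h (m + 2 : ℕ) = S.h (m + 1 : ℕ) ∧
      S.h (m + 3 : ℕ) = S.h (m + 2 : ℕ)) := by
  induction m, hm using Nat.le_induction with
  | base => exact ADM.IsControlled.not_run_of_four ⟨hMη, hyη⟩ hδ ha hMD hx
  | succ k hk ih =>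
    by_cases hrep : S.h (k + 1 : ℕ) = S.h k
    · exact fun ⟨h₁, h₂, _⟩ => ih ⟨hrep, h₁, h₂⟩
    · have hc := S.isControlled_succ_of_h_succ_ne hδ (by linarith) (hx k hk) hrep
      exact hc.not_run_of_four hδ ha hMD fun j hj => hx j (by lia)

/-- under the hypotheses of Theorem 1 (iii), the symbol sequence after `η`
contains no quadruple occurrence of the same symbol: for all `m ≥ η`,
`(h_{m+1}, h_{m+2}, h_{m+3}, h_{m+4}) ≠ ±(1,1,1,1)`. -/
theorem stmt8 (δ a Mbar M₀ y₀ D : ℝ) (x : ℝ → ℝ)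
    (hδ : 0 < δ) (ha : 1 < a) (ha2 : a ≤ 2) (hMbar : 0 < Mbar) (hM₀ : 0 < M₀)
    (hD : 0 < D) (hMD : 2 * D ≤ Mbar)
    (S : ADM δ a Mbar M₀ y₀ x)
    (η : ℕ) (hMη : S.M η = Mbar)
    (hyη : |x (η * δ) - S.y η| ≤ (a * Mbar + D) * δ)
    (hDcond : ∀ k : ℕ, η ≤ k → condD δ D x k) :
    ∀ m : ℕ, η ≤ m →
      ¬ (S.h ((m : ℤ) + 1) = 1 ∧ S.h ((m : ℤ) + 2) = 1 ∧
          S.h ((m : ℤ) + 3) = 1 ∧ S.h ((m : ℤ) + 4) = 1) ∧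
      ¬ (S.h ((m : ℤ) + 1) = -1 ∧ S.h ((m : ℤ) + 2) = -1 ∧
          S.h ((m : ℤ) + 3) = -1 ∧ S.h ((m : ℤ) + 4) = -1) := by
  intro m hm
  have key := stmt8_general hδ.le ha.le hMD S hMη.ge (hMη.symm ▸ hyη)
    (fun k hk => (hDcond k hk).abs_sample_succ_sub_le hδ.le) (hm.trans m.le_succ)
  grind
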